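/- Let n ≥ 1, let v : ℝ×ℝⁿ → ℝⁿ be C¹ with v and all its first derivatives bounded, and let X : ℝ×ℝ×ℝⁿ → ℝⁿ be a C¹ map satisfying: X(t₀; t₀, x) = x, ∂_t X(t; t₀, x) = v(t, X(t; t₀, x)), and X(t₂; t₁, X(t₁; t₀, x)) = X(t₂; t₀, x) for all times and all x. Let ρ̂₀, ρ̌₀ ∈ L¹(ℝⁿ; ℝ) and define ρ̂(t,x) = ρ̂₀(X(0; t, x)) · exp(−∫₀^t (∇·v)(τ, X(τ; t, x)) dτ) and ρ̌(t,x) = ρ̌₀(X(0; t, x)) · exp(−∫₀^t (∇·v)(τ, X(τ; t, x)) dτ). Then for every t ∈ ℝ: ‖ρ̂(t,·) − ρ̌(t,·)‖_{L¹(ℝⁿ; ℝ)} = ‖ρ̂₀ − ρ̌₀‖_{L¹(ℝⁿ; ℝ)}. -/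

import Mathlib

/-!
The flow map `Y = X(0; t, ·)` is a `C¹` bijection of `ℝⁿ` with inverse `X(t; 0, ·)`, so the change
of variables formula gives `∫ |g(Y x)| |det DY(x)| dx = ∫ |g|` for `g = ρ̂₀ - ρ̌₀`. It remains to
identify the weight, which is Liouville's formula (`det_fderiv_flow`):
`det DY(x) = exp (-∫₀ᵗ (∇·v)(τ, X(τ; t, x)) dτ)`.

For this, put `J(s) = det D_x X(s; t, x)`. The group law factors `J(r)` as
`det D X(r; s, ·) * J(s)`, and at `r = s` the first factor is the determinant of a curve of
operators through the identity. Its velocity is the spatial derivative of `v`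
(`hasDerivAt_fderiv_flow`), and the derivative of `det` at the identity is the trace
(`hasDerivAt_det_of_id`), so `J' = (∇·v) J` with `J(t) = 1`.
-/

open MeasureTheory
open scoped ENNReal NNReal

/-- The spatial divergence `(∇·v)(t, x)` of the time-dependent vector field `v`. -/
noncomputable def divv {n : ℕ}
    (v : ℝ × EuclideanSpace ℝ (Fin n) → EuclideanSpace ℝ (Fin n))
    (t : ℝ) (x : EuclideanSpace ℝ (Fin n)) : ℝ :=
  ∑ j, fderiv ℝ (fun y => v (t, y) j) x (EuclideanSpace.single j 1)

open Set Filter Topology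

/-- The determinant of an operator on Euclidean space, in the standard coordinates. -/
lemma euclid_det_eq {n : ℕ} (A : EuclideanSpace ℝ (Fin n) →L[ℝ] EuclideanSpace ℝ (Fin n)) :
    A.det = Matrix.det (fun i j => A (EuclideanSpace.single j 1) i) := by
  rw [ContinuousLinearMap.det,
    ← LinearMap.det_toMatrix (EuclideanSpace.basisFun (Fin n) ℝ).toBasis]
  rfl

lemma differentiable_clm_det {n : ℕ} :
    Differentiable ℝ
      (fun A : EuclideanSpace ℝ (Fin n) →L[ℝ] EuclideanSpace ℝ (Fin n) => A.det) := by
  have h : ∀ i j : Fin n, ContDiff ℝ 1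
      (fun A : EuclideanSpace ℝ (Fin n) →L[ℝ] EuclideanSpace ℝ (Fin n) =>
        A (EuclideanSpace.single j 1) i) := fun i j =>
    ((EuclideanSpace.proj (𝕜 := ℝ) i).comp
      (ContinuousLinearMap.apply ℝ _ (EuclideanSpace.single j (1 : ℝ)))).contDiff
  have e : (fun A : EuclideanSpace ℝ (Fin n) →L[ℝ] EuclideanSpace ℝ (Fin n) => A.det) =
      fun A => ∑ σ : Equiv.Perm (Fin n), ((Equiv.Perm.sign σ : ℤ) : ℝ) *
        ∏ i, A (EuclideanSpace.single i 1) (σ i) := by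
    funext A
    exact (euclid_det_eq A).trans (Matrix.det_apply' _)
  rw [e]
  refine Differentiable.fun_sum fun σ _ => ?_
  exact (contDiff_prod (n := 1) fun i _ => h (σ i) i).differentiable one_ne_zero |>.const_mul _

/-- Jacobi's formula at the identity: the derivative of `det` along a curve through `id` is
the trace of the velocity. It follows from the first-order expansion of `det (1 + r A)` in `r`,
since `det` is differentiable. -/
lemma hasDerivAt_det_of_id {n : ℕ}
    {N : ℝ → EuclideanSpace ℝ (Fin n) →L[ℝ] EuclideanSpace ℝ (Fin n)}
    {A : EuclideanSpace ℝ (Fin n) →L[ℝ] EuclideanSpace ℝ (Fin n)} {s : ℝ}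
    (hN : HasDerivAt N A s) (h1 : N s = ContinuousLinearMap.id ℝ _) :
    HasDerivAt (fun r => (N r).det) (∑ j, A (EuclideanSpace.single j 1) j) s := by
  set I := ContinuousLinearMap.id ℝ (EuclideanSpace ℝ (Fin n))
  have hd := (differentiable_clm_det (n := n) I).hasFDerivAt
  have key : HasDerivAt (fun r : ℝ => (I + r • A).det)
      (∑ j, A (EuclideanSpace.single j 1) j) 0 := by
    set M : Matrix (Fin n) (Fin n) ℝ := fun i j => A (EuclideanSpace.single j 1) i
    have e : (fun r : ℝ => (I + r • A).det) = fun r : ℝ => Polynomial.eval r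
        (Matrix.det (1 + (Polynomial.X : Polynomial ℝ) • M.map Polynomial.C)) := by
      funext r
      have h1 : Polynomial.eval r
          (Matrix.det (1 + (Polynomial.X : Polynomial ℝ) • M.map Polynomial.C)) =
          Matrix.det (1 + r • M) := by
        simp [_root_.eval_det, ← Matrix.smul_eq_mul_diagonal]
      rw [h1, euclid_det_eq]
      congr 1
      ext i j
      rw [Matrix.add_apply, Matrix.smul_apply]
      simp [I, M, Matrix.one_apply]
    rw [e]
    have := (Matrix.det (1 + (Polynomial.X : Polynomial ℝ) • M.map Polynomial.C)).hasDerivAt 0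
    rwa [Matrix.derivative_det_one_add_X_smul] at this
  have hl : HasDerivAt (fun r : ℝ => I + r • A) A 0 := by
    simpa using ((hasDerivAt_id (0 : ℝ)).smul_const A).const_add I
  have h2 := HasFDerivAt.comp_hasDerivAt_of_eq (0 : ℝ) hd hl
    ((congrArg (I + ·) (zero_smul ℝ A)).trans (add_zero I)).symm
  have h3 := h2.unique key
  rw [← h3]
  exact HasFDerivAt.comp_hasDerivAt_of_eq s hd hN h1.symm

/-- The variational equation at the initial time: if `X s s₀` is the flow of `v`, then
`d/ds D_x X(s; s₀, y)` at `s = s₀` is the spatial derivative of `v (s₀, ·)` at `y`. As `X` is only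
`C¹`, the mixed derivative is obtained by differentiating
`X(s; s₀, y) = y + ∫_{s₀}^s v(τ, X(τ; s₀, y)) dτ` under the integral. -/
lemma hasDerivAt_fderiv_flow {n : ℕ}
    {v : ℝ × EuclideanSpace ℝ (Fin n) → EuclideanSpace ℝ (Fin n)}
    (hv : ContDiff ℝ 1 v)
    {X : ℝ → ℝ → EuclideanSpace ℝ (Fin n) → EuclideanSpace ℝ (Fin n)}
    (hXsm : ContDiff ℝ 1
      (fun q : ℝ × ℝ × EuclideanSpace ℝ (Fin n) => X q.1 q.2.1 q.2.2))
    (hX0 : ∀ t₀ x, X t₀ t₀ x = x)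
    (hXd : ∀ t t₀ x, HasDerivAt (fun s => X s t₀ x) (v (t, X t t₀ x)) t)
    (s₀ : ℝ) (y : EuclideanSpace ℝ (Fin n)) :
    HasDerivAt (fun s => fderiv ℝ (X s s₀) y)
      ((fderiv ℝ v (s₀, y)).comp (ContinuousLinearMap.inr ℝ ℝ _)) s₀ := by
  let E := EuclideanSpace ℝ (Fin n)
  -- the integrand, as a `C¹` function of time and position
  let w : ℝ × E → E := fun p => v (p.1, X p.1 s₀ p.2)
  have hXs : ContDiff ℝ 1 (fun p : ℝ × E => X p.1 s₀ p.2) :=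
    hXsm.comp (contDiff_fst.prodMk (contDiff_const.prodMk contDiff_snd))
  have hw : ContDiff ℝ 1 w := hv.comp (contDiff_fst.prodMk hXs)
  let W : ℝ × E → E →L[ℝ] E := fun p => (fderiv ℝ w p).comp (ContinuousLinearMap.inr ℝ ℝ E)
  have hW : Continuous W :=
    (hw.continuous_fderiv one_ne_zero).clm_comp continuous_const
  have hWd : ∀ τ z, HasFDerivAt (fun z => w (τ, z)) (W (τ, z)) z := fun τ z =>
    ((hw.differentiable one_ne_zero (τ, z)).hasFDerivAt).comp z (hasFDerivAt_prodMk_right τ z)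
  have hint : ∀ s z, X s s₀ z = z + ∫ τ in s₀..s, w (τ, z) := by
    intro s z
    have hc : Continuous (fun τ => w (τ, z)) := hw.continuous.comp (by fun_prop)
    rw [intervalIntegral.integral_eq_sub_of_hasDerivAt (f := fun s => X s s₀ z)
      (fun τ _ => hXd τ s₀ z) (hc.intervalIntegrable _ _), hX0]
    abel
  have hder : ∀ s, HasFDerivAt (X s s₀)
      (ContinuousLinearMap.id ℝ E + ∫ τ in s₀..s, W (τ, y)) y := by
    intro s
    have hcomp : IsCompact (uIcc s₀ s ×ˢ Metric.closedBall y 1) :=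
      isCompact_uIcc.prod (isCompact_closedBall y 1)
    obtain ⟨B, hB⟩ := hcomp.exists_bound_of_continuousOn hW.continuousOn
    have := intervalIntegral.hasFDerivAt_integral_of_dominated_of_fderiv_le (𝕜 := ℝ)
      (μ := volume) (a := s₀) (b := s) (bound := fun _ => B)
      (F := fun z τ => w (τ, z)) (F' := fun z τ => W (τ, z))
      (Metric.closedBall_mem_nhds y one_pos)
      (Eventually.of_forall fun z =>
        (hw.continuous.comp (Continuous.prodMk_left z)).aestronglyMeasurable)
      ((hw.continuous.comp (Continuous.prodMk_left y)).intervalIntegrable _ _)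
      (hW.comp (Continuous.prodMk_left y)).aestronglyMeasurable
      (Eventually.of_forall fun τ hτ z hz => hB (τ, z) ⟨uIoc_subset_uIcc hτ, hz⟩)
      intervalIntegrable_const
      (Eventually.of_forall fun τ _ z _ => hWd τ z)
    have h2 := (hasFDerivAt_id (𝕜 := ℝ) y).add this
    refine h2.congr_of_eventuallyEq (Eventually.of_forall fun z => ?_)
    simpa using hint s z
  have hWc : Continuous (fun τ => W (τ, y)) := hW.comp (Continuous.prodMk_left y)
  have hfd : (fun s => fderiv ℝ (X s s₀) y) =
      fun s => ContinuousLinearMap.id ℝ E + ∫ τ in s₀..s, W (τ, y) :=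
    funext fun s => (hder s).fderiv
  rw [hfd]
  -- at the initial time `X s₀ s₀` is the identity, so `W` reduces to the derivative of `v (s₀, ·)`
  have hW0 : W (s₀, y) = (fderiv ℝ v (s₀, y)).comp (ContinuousLinearMap.inr ℝ ℝ E) := by
    have h1 := hWd s₀ y
    have h2 : (fun z => w (s₀, z)) = fun z => v (s₀, z) := by
      funext z
      simp only [w, hX0]
    rw [h2] at h1
    exact h1.unique (((hv.differentiable one_ne_zero (s₀, y)).hasFDerivAt).comp y
      (hasFDerivAt_prodMk_right s₀ y))
  rw [← hW0]
  exact (hWc.integral_hasStrictDerivAt s₀ s₀).hasDerivAt.const_add _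

lemma divv_eq {n : ℕ}
    {v : ℝ × EuclideanSpace ℝ (Fin n) → EuclideanSpace ℝ (Fin n)}
    (hv : ContDiff ℝ 1 v) (t : ℝ) (x : EuclideanSpace ℝ (Fin n)) :
    divv v t x = ∑ j, ((fderiv ℝ v (t, x)).comp
      (ContinuousLinearMap.inr ℝ ℝ _)) (EuclideanSpace.single j 1) j := by
  unfold divv
  refine Finset.sum_congr rfl fun j _ => ?_
  have h := ((hv.differentiable one_ne_zero (t, x)).hasFDerivAt).comp x
    (hasFDerivAt_prodMk_right t x)
  have h2 := (EuclideanSpace.proj (𝕜 := ℝ) j : EuclideanSpace ℝ (Fin n) →L[ℝ] ℝ).hasFDerivAt.comp x h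
  have h3 : HasFDerivAt (fun y => v (t, y) j) _ x := h2
  rw [h3.fderiv]
  simp

/-- **Liouville's formula** for the Jacobian determinant of the backward flow. -/
lemma det_fderiv_flow {n : ℕ}
    {v : ℝ × EuclideanSpace ℝ (Fin n) → EuclideanSpace ℝ (Fin n)}
    (hv : ContDiff ℝ 1 v)
    {X : ℝ → ℝ → EuclideanSpace ℝ (Fin n) → EuclideanSpace ℝ (Fin n)}
    (hXsm : ContDiff ℝ 1
      (fun q : ℝ × ℝ × EuclideanSpace ℝ (Fin n) => X q.1 q.2.1 q.2.2))
    (hX0 : ∀ t₀ x, X t₀ t₀ x = x)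
    (hXd : ∀ t t₀ x, HasDerivAt (fun s => X s t₀ x) (v (t, X t t₀ x)) t)
    (hXc : ∀ t₂ t₁ t₀ x, X t₂ t₁ (X t₁ t₀ x) = X t₂ t₀ x)
    (t : ℝ) (x : EuclideanSpace ℝ (Fin n)) :
    (fderiv ℝ (X 0 t) x).det = Real.exp (-(∫ τ in (0 : ℝ)..t, divv v τ (X τ t x))) := by
  let E := EuclideanSpace ℝ (Fin n)
  have hXdiff : ∀ s r, Differentiable ℝ (X s r) := fun s r =>
    (hXsm.comp (contDiff_const.prodMk (contDiff_const.prodMk contDiff_id))).differentiable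
      one_ne_zero
  have hid : ∀ r, X r r = id := fun r => funext (hX0 r)
  let d : ℝ → ℝ := fun τ => divv v τ (X τ t x)
  have hd : Continuous d := by
    have hXcont : Continuous (fun τ => X τ t x) :=
      hXsm.continuous.comp (by fun_prop : Continuous fun τ : ℝ => (τ, t, x))
    have hf : Continuous (fun τ => fderiv ℝ v (τ, X τ t x)) :=
      (hv.continuous_fderiv one_ne_zero).comp (continuous_id.prodMk hXcont)
    simp only [d, divv_eq hv]
    refine continuous_finsetSum _ fun j _ => ?_
    exact (EuclideanSpace.proj (𝕜 := ℝ) j : EuclideanSpace ℝ (Fin n) →L[ℝ] ℝ).continuous.comp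
      ((hf.clm_comp continuous_const).clm_apply continuous_const)
  let J : ℝ → ℝ := fun s => (fderiv ℝ (X s t) x).det
  have hJ : ∀ s, HasDerivAt J (d s * J s) s := by
    intro s
    -- the group law gives `J r = det (D X(r; s, ·)) * J s`, reducing to the time-`s` derivative
    have hmul : J = fun r => (fderiv ℝ (X r s) (X s t x)).det * J s := by
      funext r
      have hc : X r t = X r s ∘ X s t := funext fun z => (hXc r s t z).symm
      simp only [J]
      rw [hc, fderiv_comp x (hXdiff r s _) (hXdiff s t x)]
      exact LinearMap.det_comp _ _
    have h1 := hasDerivAt_det_of_id (hasDerivAt_fderiv_flow hv hXsm hX0 hXd s (X s t x))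
      (by rw [hid, fderiv_id])
    rw [← divv_eq hv] at h1
    have h2 := h1.mul_const (J s)
    rw [← hmul] at h2
    exact h2
  let P : ℝ → ℝ := fun s => ∫ τ in t..s, d τ
  have hP : ∀ s, HasDerivAt P (d s) s := fun s => (hd.integral_hasStrictDerivAt t s).hasDerivAt
  have hQ : ∀ s, HasDerivAt (fun s => J s * Real.exp (-P s)) 0 s := by
    intro s
    convert! (hJ s).mul ((hP s).neg.exp) using 1
    ring
  have hconst := is_const_of_deriv_eq_zero (fun s => (hQ s).differentiableAt)
    (fun s => (hQ s).deriv) 0 t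
  have hJt : J t = 1 := by
    simp only [J, hid, fderiv_id]
    simp [ContinuousLinearMap.det]
  have hPt : P t = 0 := intervalIntegral.integral_same
  have hP0 : P 0 = -∫ τ in (0 : ℝ)..t, d τ := intervalIntegral.integral_symm _ _
  simp only [hJt, hPt, hP0, neg_neg, neg_zero, Real.exp_zero, mul_one] at hconst
  change J 0 = Real.exp (-∫ τ in (0 : ℝ)..t, d τ)
  rw [Real.exp_neg]
  exact eq_inv_of_mul_eq_one_left hconst

theorem stmt_19 {n : ℕ} (hn : 1 ≤ n)
    (v : ℝ × EuclideanSpace ℝ (Fin n) → EuclideanSpace ℝ (Fin n))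
    (hv : ContDiff ℝ 1 v)
    (hvbd : ∃ C : ℝ, ∀ p, ‖v p‖ ≤ C ∧ ‖fderiv ℝ v p‖ ≤ C)
    (X : ℝ → ℝ → EuclideanSpace ℝ (Fin n) → EuclideanSpace ℝ (Fin n))
    (hXsm : ContDiff ℝ 1
      (fun q : ℝ × ℝ × EuclideanSpace ℝ (Fin n) => X q.1 q.2.1 q.2.2))
    (hX0 : ∀ t₀ x, X t₀ t₀ x = x)
    (hXd : ∀ t t₀ x, HasDerivAt (fun s => X s t₀ x) (v (t, X t t₀ x)) t)
    (hXc : ∀ t₂ t₁ t₀ x, X t₂ t₁ (X t₁ t₀ x) = X t₂ t₀ x)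
    (ρh₀ ρc₀ : EuclideanSpace ℝ (Fin n) → ℝ)
    (hρh₀ : Integrable ρh₀) (hρc₀ : Integrable ρc₀)
    (ρh ρc : ℝ → EuclideanSpace ℝ (Fin n) → ℝ)
    (hρhdef : ∀ t x, ρh t x =
      ρh₀ (X 0 t x) * Real.exp (-(∫ τ in (0 : ℝ)..t, divv v τ (X τ t x))))
    (hρcdef : ∀ t x, ρc t x =
      ρc₀ (X 0 t x) * Real.exp (-(∫ τ in (0 : ℝ)..t, divv v τ (X τ t x)))) :
    ∀ t : ℝ, ∫ x, |ρh t x - ρc t x| = ∫ x, |ρh₀ x - ρc₀ x| := by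
  intro t
  have hXdiff : Differentiable ℝ (X 0 t) :=
    (hXsm.comp (contDiff_const.prodMk (contDiff_const.prodMk contDiff_id))).differentiable
      one_ne_zero
  have hinj : Function.Injective (X 0 t) := fun a b hab => by
    have := congrArg (X t 0) hab
    rwa [hXc, hXc, hX0, hX0] at this
  have hsurj : Function.Surjective (X 0 t) := fun a => ⟨X t 0 a, by rw [hXc, hX0]⟩
  have hcv := integral_image_eq_integral_abs_det_fderiv_smul volume MeasurableSet.univ
    (fun x _ => (hXdiff x).hasFDerivAt.hasFDerivWithinAt) hinj.injOn
    (fun x => |ρh₀ x - ρc₀ x|)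
  rw [Set.image_univ, hsurj.range_eq, Measure.restrict_univ] at hcv
  rw [hcv]
  refine integral_congr_ae (Eventually.of_forall fun x => ?_)
  simp only [hρhdef, hρcdef, det_fderiv_flow hv hXsm hX0 hXd hXc t x, smul_eq_mul]
  rw [← sub_mul, abs_mul, mul_comm]
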